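/- arXiv:1805.11870 — 3 statements merged into one kernel-verified Lean document; each statement's English description precedes it below -/
import Mathlib

section
/- Let s* > 2 (in the paper s* = 2* := 2N/(N−2)) and let f ∈ C¹(ℝ) satisfy f(0) = 0 and |f'(s)| ≤ A₁|s|^{s*−2} for all s ∈ ℝ. Then for every τ > 1 there exists C > 0 such that |t f(u) − f(t u)| ≤ C |u|^{s*−1} |t − 1| for all u ∈ ℝ and all t ∈ [0, τ]. -/
/-- **Pointwise estimate in Lemma 4.4.** If `f ∈ C¹(ℝ)`, `f(0) = 0` and
`|f'(s)| ≤ A₁|s|^{s*−2}` with `s* > 2`, then for every `τ > 1` there is `C > 0` with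
`|t f(u) − f(tu)| ≤ C |u|^{s*−1} |t−1|` for all `u ∈ ℝ` and `t ∈ [0,τ]`. -/
theorem pointwise_homogeneity_estimate
    (sstar A₁ : ℝ) (hs : 2 < sstar) (hA₁ : 0 < A₁)
    (f : ℝ → ℝ) (hC1 : ContDiff ℝ 1 f) (hf0 : f 0 = 0)
    (hd : ∀ s : ℝ, |deriv f s| ≤ A₁ * |s| ^ (sstar - 2)) :
    ∀ τ : ℝ, 1 < τ → ∃ C : ℝ, 0 < C ∧
      ∀ u t : ℝ, 0 ≤ t → t ≤ τ → |t * f u - f (t * u)| ≤ C * |u| ^ (sstar - 1) * |t - 1| := by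
  intro τ hτ
  have hτ0 : 0 < τ := by linarith
  refine ⟨2 * A₁ * τ ^ (sstar - 2), by positivity, ?_⟩
  intro u t ht0 ht
  have hdiff : Differentiable ℝ f := hC1.differentiable (by norm_num)
  have key : ∀ x y : ℝ, |x| ≤ τ * |u| → |y| ≤ τ * |u| →
      |f y - f x| ≤ A₁ * (τ * |u|) ^ (sstar - 2) * |y - x| := by
    intro x y hx hy
    have h := Convex.norm_image_sub_le_of_norm_deriv_le (f := f)
      (s := Set.Icc (-(τ * |u|)) (τ * |u|)) (C := A₁ * (τ * |u|) ^ (sstar - 2))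
      (x := x) (y := y) (fun z _ => hdiff z) (fun z hz => ?_) (convex_Icc _ _)
      (abs_le.mp hx) (abs_le.mp hy)
    · simpa [Real.norm_eq_abs] using h
    · rw [Real.norm_eq_abs]
      refine (hd z).trans ?_
      refine mul_le_mul_of_nonneg_left ?_ hA₁.le
      exact Real.rpow_le_rpow (abs_nonneg z) (abs_le.mpr hz) (by linarith)
  have hu : |u| ≤ τ * |u| := by nlinarith [abs_nonneg u]
  have h1 := key 0 u (by rw [abs_zero]; positivity) hu
  have h2 := key (t * u) u
    (by rw [abs_mul, abs_of_nonneg ht0]; exact mul_le_mul_of_nonneg_right ht (abs_nonneg u)) hu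
  rw [hf0, sub_zero, sub_zero] at h1
  have e1 : |u - t * u| = |t - 1| * |u| := by
    rw [← abs_mul, ← abs_neg]; congr 1; ring
  rw [e1] at h2
  have e2 : |u| ^ (sstar - 1) = |u| ^ (sstar - 2) * |u| := by
    rw [← Real.rpow_add_one' (abs_nonneg u) (by linarith)]; congr 1; ring
  rw [Real.mul_rpow hτ0.le (abs_nonneg u)] at h1 h2
  have h3 : |t * f u - f (t * u)| ≤ |t - 1| * |f u| + |f u - f (t * u)| := by
    rw [← abs_mul]
    refine le_trans (le_of_eq ?_) (abs_add_le _ _)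
    congr 1; ring
  have h4 := mul_le_mul_of_nonneg_left h1 (abs_nonneg (t - 1))
  rw [e2]
  linarith
end

section
/- Let N ≥ 4, 2* := 2N/(N−2), and let f satisfy (f1) and (f2), with F(s) := ∫₀^s f(t) dt. Then for every r > 0, every integer m ≥ 1, and every ν ∈ (0, q−2), there exists a constant C_{r,m,ν} > 0 such that, for any numbers a₁, …, a_m ∈ (0, r], F( Σ_{i=1}^m a_i ) − Σ_{i=1}^m F(a_i) − Σ_{i≠j} f(a_i) a_j ≥ − C_{r,m,ν} Σ_{i≠j} (a_i a_j)^{1 + ν/2}, where the double sums run over ordered pairs (i,j) with 1 ≤ i, j ≤ m and i ≠ j. -/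
noncomputable section
open Finset

/-- `F(s) = ∫₀ˢ f(t) dt`. -/
def Fint (f : ℝ → ℝ) (s : ℝ) : ℝ := ∫ t in (0:ℝ)..s, f t


theorem aux_superadd (f : ℝ → ℝ) (h0 : f 0 = 0) (hC1 : ContDiff ℝ 1 f)
    (h : ∀ s : ℝ, 0 < s → f s * s < deriv f s * s ^ 2) (a t : ℝ) (ha : 0 ≤ a) (ht : 0 ≤ t) :
    f a + f t ≤ f (a + t) := by
  have hd : Differentiable ℝ f := hC1.differentiable (by norm_num)
  have hmono : MonotoneOn (fun s => f s / s) (Set.Ioi 0) := by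
    apply monotoneOn_of_deriv_nonneg (convex_Ioi 0)
    · intro x hx
      exact ((hd x).continuousAt.div continuousAt_id (ne_of_gt hx)).continuousWithinAt
    · intro x hx
      rw [interior_Ioi] at hx
      exact ((hd x).div differentiableAt_id (ne_of_gt hx)).differentiableWithinAt
    · intro x hx
      rw [interior_Ioi] at hx
      have hx' : 0 < x := hx
      have hder : HasDerivAt (fun s => f s / s) ((deriv f x * x - f x * 1) / x ^ 2) x :=
        (hd x).hasDerivAt.div (hasDerivAt_id x) (ne_of_gt hx')
      rw [hder.deriv]
      apply div_nonneg _ (by positivity)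
      have := h x hx'
      have h2 : 0 < (deriv f x * x - f x) * x := by nlinarith
      have := pos_of_mul_pos_left h2 hx'.le
      linarith
  rcases ha.eq_or_lt with rfl | ha
  · simp [h0]
  rcases ht.eq_or_lt with rfl | ht
  · simp [h0]
  have hs : 0 < a + t := by linarith
  have h1 : f a / a ≤ f (a + t) / (a + t) :=
    hmono (Set.mem_Ioi.2 ha) (Set.mem_Ioi.2 hs) (by linarith)
  have h2 : f t / t ≤ f (a + t) / (a + t) :=
    hmono (Set.mem_Ioi.2 ht) (Set.mem_Ioi.2 hs) (by linarith)
  rw [div_le_iff₀ ha] at h1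
  rw [div_le_iff₀ ht] at h2
  have : f (a + t) / (a + t) * a + f (a + t) / (a + t) * t = f (a + t) := by
    field_simp
  linarith

theorem aux_Fint (f : ℝ → ℝ) (hf : Continuous f)
    (h : ∀ a t : ℝ, 0 ≤ a → 0 ≤ t → f a + f t ≤ f (a + t)) (a b : ℝ) (ha : 0 ≤ a) (hb : 0 ≤ b) :
    Fint f a + Fint f b + f a * b ≤ Fint f (a + b) := by
  have h1 : Fint f (a + b) = Fint f a + ∫ t in (0:ℝ)..b, f (a + t) := by
    unfold Fint
    rw [intervalIntegral.integral_comp_add_left (fun t => f t) a, add_zero]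
    exact (intervalIntegral.integral_add_adjacent_intervals
      (hf.intervalIntegrable _ _) (hf.intervalIntegrable _ _)).symm
  have h2 : (∫ t in (0:ℝ)..b, (f a + f t)) ≤ ∫ t in (0:ℝ)..b, f (a + t) := by
    apply intervalIntegral.integral_mono_on hb
    · exact (continuous_const.add hf).intervalIntegrable _ _
    · exact (hf.comp (continuous_const.add continuous_id)).intervalIntegrable _ _
    · intro x hx
      exact h a x ha hx.1
  rw [intervalIntegral.integral_add (continuous_const.intervalIntegrable _ _)
    (hf.intervalIntegrable _ _), intervalIntegral.integral_const] at h2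
  simp only [sub_zero, smul_eq_mul] at h2
  rw [h1]
  unfold Fint at *
  linarith

theorem aux_sum {ι : Type*} [DecidableEq ι] (s : Finset ι) (x : ι) (hx : x ∉ s)
    (g : ι × ι → ℝ) :
    ∑ ij ∈ (insert x s).offDiag, g ij =
      ∑ ij ∈ s.offDiag, g ij + ∑ j ∈ s, g (x, j) + ∑ j ∈ s, g (j, x) := by
  rw [Finset.offDiag_insert hx, Finset.sum_union, Finset.sum_union]
  · simp [Finset.sum_product]
  · rw [Finset.disjoint_left]
    rintro ⟨i, j⟩ h1 h2
    simp only [Finset.mem_offDiag, Finset.mem_product, Finset.mem_singleton] at h1 h2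
    exact hx (h2.1 ▸ h1.1)
  · rw [Finset.disjoint_left]
    rintro ⟨i, j⟩ h1 h2
    simp only [Finset.mem_union, Finset.mem_offDiag, Finset.mem_product,
      Finset.mem_singleton] at h1 h2
    rcases h1 with h1 | h1
    · exact hx (h2.2 ▸ h1.2.1)
    · exact hx (h2.2 ▸ h1.2)

/-- **Lemma 4.7.** Under (f1)–(f2), for every `r > 0`, `m ≥ 1` and `ν ∈ (0, q−2)` there is
`C > 0` such that for all `a₁, …, a_m ∈ (0, r]`,
`F(Σ aᵢ) − Σ F(aᵢ) − Σ_{i≠j} f(aᵢ)aⱼ ≥ −C Σ_{i≠j} (aᵢaⱼ)^{1+ν/2}`. Here `N = M + 2 ≥ 4`. -/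
theorem superadditivity_with_error
    (M : ℕ) (hM : 2 ≤ M)
    (f : ℝ → ℝ) (hodd : ∀ s : ℝ, f (-s) = - f s) (hC1 : ContDiff ℝ 1 f)
    (A₁ p q θ : ℝ) (hA₁ : 0 < A₁) (hp : 2 < p)
    (hpS : p < 2 * ((M : ℝ) + 2) / M) (hqS : 2 * ((M : ℝ) + 2) / M < q)
    (hf1a : ∀ s : ℝ, 1 ≤ |s| →
      |Fint f s| ≤ A₁ * |s| ^ p ∧ |f s| ≤ A₁ * |s| ^ (p - 1) ∧ |deriv f s| ≤ A₁ * |s| ^ (p - 2))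
    (hf1b : ∀ s : ℝ, |s| ≤ 1 →
      |Fint f s| ≤ A₁ * |s| ^ q ∧ |f s| ≤ A₁ * |s| ^ (q - 1) ∧ |deriv f s| ≤ A₁ * |s| ^ (q - 2))
    (hθ : 2 < θ)
    (hf2 : ∀ s : ℝ, 0 < s →
      0 ≤ θ * Fint f s ∧ θ * Fint f s ≤ f s * s ∧ f s * s < deriv f s * s ^ 2) :
    ∀ r : ℝ, 0 < r → ∀ m : ℕ, 1 ≤ m → ∀ ν : ℝ, 0 < ν → ν < q - 2 →
      ∃ C : ℝ, 0 < C ∧ ∀ a : Fin m → ℝ, (∀ i, 0 < a i ∧ a i ≤ r) →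
        Fint f (∑ i, a i) - (∑ i, Fint f (a i)) -
            (∑ ij ∈ Finset.univ.offDiag, f (a ij.1) * a ij.2) ≥
          -C * ∑ ij ∈ Finset.univ.offDiag, (a ij.1 * a ij.2) ^ (1 + ν / 2) := by
  intro r hr m _ ν hν hνq
  have h0 : f 0 = 0 := by
    have := hodd 0
    rw [neg_zero] at this
    linarith
  have hsup := aux_superadd f h0 hC1 (fun s hs => (hf2 s hs).2.2)
  have hF := aux_Fint f hC1.continuous hsup
  set K : ℝ := A₁ * (1 + r ^ p) with hK
  have hrp : 0 < r ^ p := Real.rpow_pos_of_pos hr p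
  have hKpos : 0 < K := by positivity
  have hbound : ∀ b : ℝ, 0 < b → b ≤ r → f b ≤ K * b ^ (1 + ν) := by
    intro b hb hbr
    have hbν : 0 < b ^ (1 + ν) := Real.rpow_pos_of_pos hb _
    rcases le_total b 1 with h1 | h1
    · have h2 := (hf1b b (by rwa [abs_of_pos hb])).2.1
      rw [abs_of_pos hb] at h2
      have h3 : b ^ (q - 1) ≤ b ^ (1 + ν) :=
        Real.rpow_le_rpow_of_exponent_ge hb h1 (by linarith)
      calc f b ≤ A₁ * b ^ (q - 1) := (le_abs_self _).trans h2
        _ ≤ A₁ * b ^ (1 + ν) := by gcongr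
        _ ≤ K * b ^ (1 + ν) := by
          gcongr
          rw [hK]
          nlinarith
    · have h2 := (hf1a b (by rwa [abs_of_pos hb])).2.1
      rw [abs_of_pos hb] at h2
      have h3 : b ^ (p - 1) ≤ b ^ p :=
        Real.rpow_le_rpow_of_exponent_le h1 (by linarith)
      have h4 : b ^ p ≤ r ^ p := Real.rpow_le_rpow hb.le hbr (by linarith)
      have h5 : 1 ≤ b ^ (1 + ν) := Real.one_le_rpow h1 (by linarith)
      calc f b ≤ A₁ * b ^ (p - 1) := (le_abs_self _).trans h2
        _ ≤ A₁ * (1 + r ^ p) := by gcongr; linarith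
        _ ≤ K * b ^ (1 + ν) := le_mul_of_one_le_right hKpos.le h5
  have hcross : ∀ a b : ℝ, 0 < b → b ≤ r → b ≤ a →
      f b * a ≤ K * (b * a) ^ (1 + ν / 2) := by
    intro a b hb hbr hba
    have ha : 0 < a := hb.trans_le hba
    have h1 := hbound b hb hbr
    have h2 : b ^ (1 + ν) = b ^ (1 + ν / 2) * b ^ (ν / 2) := by
      rw [← Real.rpow_add hb]
      congr 1
      ring
    have h3 : a ^ (1 + ν / 2) = a ^ (ν / 2) * a := by
      rw [Real.rpow_add ha, Real.rpow_one, mul_comm]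
    have h4 : b ^ (ν / 2) ≤ a ^ (ν / 2) := Real.rpow_le_rpow hb.le hba (by linarith)
    have h5 : 0 < b ^ (1 + ν / 2) := Real.rpow_pos_of_pos hb _
    rw [Real.mul_rpow hb.le ha.le, h3]
    calc f b * a ≤ K * b ^ (1 + ν) * a := by gcongr
      _ = K * (b ^ (1 + ν / 2) * (b ^ (ν / 2) * a)) := by rw [h2]; ring
      _ ≤ K * (b ^ (1 + ν / 2) * (a ^ (ν / 2) * a)) := by gcongr
  refine ⟨K, hKpos, fun a ha => ?_⟩
  suffices H : ∀ s : Finset (Fin m), Fint f (∑ i ∈ s, a i) - (∑ i ∈ s, Fint f (a i)) -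
            (∑ ij ∈ s.offDiag, f (a ij.1) * a ij.2) ≥
          -K * ∑ ij ∈ s.offDiag, (a ij.1 * a ij.2) ^ (1 + ν / 2) from H Finset.univ
  intro s
  induction s using Finset.induction_on_max_value a with
  | empty => simp [Fint]
  | insert x s hx hmax ih =>
    rw [aux_sum s x hx, aux_sum s x hx, Finset.sum_insert hx, Finset.sum_insert hx]
    have hS : 0 ≤ ∑ i ∈ s, a i := Finset.sum_nonneg fun i _ => (ha i).1.le
    have h1 := hF (a x) _ (ha x).1.le hS
    rw [Finset.mul_sum] at h1
    have h2 : ∑ j ∈ s, f (a j) * a x ≤ K * ∑ j ∈ s, (a j * a x) ^ (1 + ν / 2) := by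
      rw [Finset.mul_sum]
      exact Finset.sum_le_sum fun j hj => hcross _ _ (ha j).1 (ha j).2 (hmax j hj)
    have h3 : 0 ≤ K * ∑ j ∈ s, (a x * a j) ^ (1 + ν / 2) :=
      mul_nonneg hKpos.le (Finset.sum_nonneg fun j _ =>
        Real.rpow_nonneg (mul_nonneg (ha x).1.le (ha j).1.le) _)
    simp only [ge_iff_le, neg_mul, mul_add] at ih ⊢
    linarith
end
end

section
/- Let N ≥ 3, 2* := 2N/(N−2), and let f ∈ C¹(ℝ) satisfy f(0) = 0 and |f'(s)| ≤ A₁|s|^{2*−2} for all s ∈ ℝ. Let u_k, u: ℝ^N → ℝ be measurable functions such that u_k → u almost everywhere on ℝ^N and sup_k ∫_{ℝ^N}|u_k|^{2*} < ∞. Then ∫_{ℝ^N} f(u_k) u_k − ∫_{ℝ^N} f(u_k − u)(u_k − u) → ∫_{ℝ^N} f(u) u as k → ∞ (all the integrals being finite). -/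
noncomputable section
open MeasureTheory Filter ENNReal

theorem g_bound (p : ℝ) (hp : 2 < p) (f : ℝ → ℝ) (hC1 : ContDiff ℝ 1 f) (hf0 : f 0 = 0)
    (A : ℝ) (hA : 0 < A) (hd : ∀ s : ℝ, |deriv f s| ≤ A * |s| ^ (p - 2)) (a b : ℝ) :
    |f a * a - f b * b| ≤ 2 * A * (max |a| |b|) ^ (p - 1) * |a - b| := by
  have hdiff : Differentiable ℝ f := hC1.differentiable (by norm_num)
  have key : ∀ a b : ℝ, |f a - f b| ≤ A * (max |a| |b|) ^ (p - 2) * |a - b| := by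
    intro a b
    have hs : Convex ℝ (Set.Icc (-(max |a| |b|)) (max |a| |b|)) := convex_Icc _ _
    have := hs.norm_image_sub_le_of_norm_deriv_le (f := f) (C := A * (max |a| |b|) ^ (p - 2))
      (x := b) (y := a) (fun x _ => hdiff x) (fun x hx => by
        rw [Real.norm_eq_abs]
        refine (hd x).trans ?_
        have : |x| ≤ max |a| |b| := abs_le.2 hx
        gcongr) (abs_le.1 (le_max_right _ _)) (abs_le.1 (le_max_left _ _))
    simpa [Real.norm_eq_abs] using this
  set m := max |a| |b| with hm
  have hm0 : 0 ≤ m := (abs_nonneg a).trans (le_max_left _ _)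
  have hmm : m ^ (p - 1) = m ^ (p - 2) * m := by
    rw [show p - 1 = (p - 2) + 1 by ring, Real.rpow_add_one' hm0 (by linarith)]
  have h1 := key a b
  have h2 : |f b| ≤ A * m ^ (p - 1) := by
    have h3 := key b 0
    simp only [hf0, sub_zero, abs_zero] at h3
    rw [max_eq_left (abs_nonneg b)] at h3
    rw [hmm]
    have hb : |b| ≤ m := le_max_right _ _
    calc |f b| ≤ A * |b| ^ (p - 2) * |b| := h3
      _ ≤ A * m ^ (p - 2) * m := by
        gcongr
      _ = _ := by ring
  have ha : |a| ≤ m := le_max_left _ _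
  calc |f a * a - f b * b| = |(f a - f b) * a + f b * (a - b)| := by ring_nf
    _ ≤ |f a - f b| * |a| + |f b| * |a - b| := by
      rw [← abs_mul, ← abs_mul]; exact abs_add_le _ _
    _ ≤ (A * m ^ (p - 2) * |a - b|) * m + (A * m ^ (p - 1)) * |a - b| := by gcongr
    _ = _ := by rw [hmm]; ring

theorem eps_bound (p : ℝ) (hp : 2 < p) (g : ℝ → ℝ) (K : ℝ) (hK : 0 < K)
    (hg : ∀ a b, |g a - g b| ≤ K * (max |a| |b|) ^ (p - 1) * |a - b|) (ε : ℝ) (hε : 0 < ε) :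
    ∃ D : ℝ, 0 ≤ D ∧ ∀ w v : ℝ, |g (w + v) - g w| ≤ ε * |w| ^ p + D * |v| ^ p := by
  have hpow : ∀ x : ℝ, 0 ≤ x → x ^ p = x ^ (p - 1) * x := by
    intro x hx
    rw [← Real.rpow_add_one' hx (by linarith)]; ring_nf
  set δ : ℝ := min 1 (ε / (K * 2 ^ (p - 1))) with hδ
  have hδ0 : 0 < δ := by positivity
  have hδ1 : δ ≤ 1 := min_le_left _ _
  have hδ2 : K * 2 ^ (p - 1) * δ ≤ ε := by
    have : δ ≤ ε / (K * 2 ^ (p - 1)) := min_le_right _ _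
    rw [le_div_iff₀ (by positivity)] at this
    linarith
  refine ⟨K * (1 / δ + 1) ^ (p - 1), by positivity, fun w v => ?_⟩
  have h1 := hg (w + v) w
  rw [add_sub_cancel_left] at h1
  have hmax : max |w + v| |w| ≤ |w| + |v| :=
    max_le (abs_add_le _ _) (by linarith [abs_nonneg v])
  have hp1 : 0 ≤ p - 1 := by linarith
  have hm0 : 0 ≤ max |w + v| |w| := (abs_nonneg w).trans (le_max_right _ _)
  rcases le_total |v| (δ * |w|) with h | h
  · have hv : |v| ≤ |w| := h.trans (mul_le_of_le_one_left (abs_nonneg _) hδ1)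
    have : |g (w + v) - g w| ≤ ε * |w| ^ p := by
      calc _ ≤ _ := h1
        _ ≤ K * (2 * |w|) ^ (p - 1) * (δ * |w|) := by
          gcongr
          linarith
        _ = (K * 2 ^ (p - 1) * δ) * |w| ^ p := by
          rw [Real.mul_rpow (by norm_num) (abs_nonneg _), hpow _ (abs_nonneg w)]; ring
        _ ≤ _ := by gcongr
    have : 0 ≤ K * (1 / δ + 1) ^ (p - 1) * |v| ^ p := by positivity
    linarith
  · have hw : |w| ≤ 1 / δ * |v| := by
      rw [one_div, ← div_eq_inv_mul, le_div_iff₀ hδ0]; linarith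
    have : |g (w + v) - g w| ≤ K * (1 / δ + 1) ^ (p - 1) * |v| ^ p := by
      calc _ ≤ _ := h1
        _ ≤ K * ((1 / δ + 1) * |v|) ^ (p - 1) * |v| := by
          gcongr
          linarith
        _ = _ := by
          rw [Real.mul_rpow (by positivity) (abs_nonneg _), hpow _ (abs_nonneg v)]; ring
    have : 0 ≤ ε * |w| ^ p := by positivity
    linarith

theorem add_pow_bound (p : ℝ) (hp : 2 < p) (a b : ℝ) :
    |a - b| ^ p ≤ 2 ^ p * (|a| ^ p + |b| ^ p) := by
  have h1 : |a - b| ≤ 2 * max |a| |b| := by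
    have := abs_sub a b
    linarith [le_max_left |a| |b|, le_max_right |a| |b|]
  have hm0 : 0 ≤ max |a| |b| := (abs_nonneg a).trans (le_max_left _ _)
  calc |a - b| ^ p ≤ (2 * max |a| |b|) ^ p := by
        gcongr
    _ = 2 ^ p * (max |a| |b|) ^ p := Real.mul_rpow (by norm_num) hm0
    _ ≤ _ := by
      gcongr
      rcases max_choice |a| |b| with h | h <;> rw [h]
      · have : 0 ≤ |b| ^ p := by positivity
        linarith
      · have : 0 ≤ |a| ^ p := by positivity
        linarith

theorem BL {α : Type*} [MeasurableSpace α] (μ : Measure α) (p : ℝ) (hp : 2 < p)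
    (g : ℝ → ℝ) (hgc : Continuous g) (g0 : g 0 = 0) (K : ℝ) (hK : 0 < K)
    (hg : ∀ a b, |g a - g b| ≤ K * (max |a| |b|) ^ (p - 1) * |a - b|)
    (u : ℕ → α → ℝ) (v : α → ℝ)
    (hmeas : ∀ k, Measurable (u k)) (hvmeas : Measurable v)
    (hae : ∀ᵐ x ∂μ, Tendsto (fun k => u k x) atTop (nhds (v x)))
    (C : ℝ≥0∞) (hC : C ≠ ⊤)
    (hbd : ∀ k, (∫⁻ x, ENNReal.ofReal (|u k x| ^ p) ∂μ) ≤ C) :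
    (∀ k, Integrable (fun x => g (u k x)) μ ∧ Integrable (fun x => g (u k x - v x)) μ) ∧
    Integrable (fun x => g (v x)) μ ∧
    Tendsto (fun k => (∫ x, g (u k x) ∂μ) - ∫ x, g (u k x - v x) ∂μ)
      atTop (nhds (∫ x, g (v x) ∂μ)) := by
  have hp0 : 0 ≤ p := by linarith
  have hpc : Continuous (fun s : ℝ => |s| ^ p) :=
    continuous_abs.rpow_const (fun _ => Or.inr hp0)
  have hpm := hpc.measurable
  have hvb : (∫⁻ x, ENNReal.ofReal (|v x| ^ p) ∂μ) ≤ C := by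
    calc (∫⁻ x, ENNReal.ofReal (|v x| ^ p) ∂μ)
        = ∫⁻ x, liminf (fun k => ENNReal.ofReal (|u k x| ^ p)) atTop ∂μ := by
          apply lintegral_congr_ae
          filter_upwards [hae] with x hx
          exact (((ENNReal.continuous_ofReal.comp hpc).tendsto _).comp hx).liminf_eq.symm
      _ ≤ liminf (fun k => ∫⁻ x, ENNReal.ofReal (|u k x| ^ p) ∂μ) atTop :=
          lintegral_liminf_le (fun k => (hpm.comp (hmeas k)).ennreal_ofReal)
      _ ≤ C := by
          refine liminf_le_of_le (by isBoundedDefault) (fun b hb => ?_)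
          obtain ⟨k, hk⟩ := hb.exists
          exact hk.trans (hbd k)
  have hint : ∀ w : α → ℝ, Measurable w → (∫⁻ x, ENNReal.ofReal (|w x| ^ p) ∂μ) ≤ C →
      Integrable (fun x => |w x| ^ p) μ ∧ ∫ x, |w x| ^ p ∂μ ≤ C.toReal := by
    intro w hw hb
    have hnn : 0 ≤ᵐ[μ] (fun x => |w x| ^ p) := Eventually.of_forall fun x => by
      simp only [Pi.zero_apply]; positivity
    refine ⟨⟨(hpm.comp hw).aestronglyMeasurable, ?_⟩, ?_⟩
    · rw [hasFiniteIntegral_iff_ofReal hnn]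
      exact hb.trans_lt hC.lt_top
    · rw [integral_eq_lintegral_of_nonneg_ae hnn (hpm.comp hw).aestronglyMeasurable]
      exact ENNReal.toReal_mono hC hb
  have hvI := hint v hvmeas hvb
  have huI := fun k => hint (u k) (hmeas k) (hbd k)
  have hwm : ∀ k, Measurable (fun x => u k x - v x) := fun k => (hmeas k).sub hvmeas
  have hwI : ∀ k, Integrable (fun x => |u k x - v x| ^ p) μ := fun k =>
    (((huI k).1.add hvI.1).const_mul (2 ^ p)).mono' (hpm.comp (hwm k)).aestronglyMeasurable
      (Eventually.of_forall fun x => by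
        rw [Real.norm_of_nonneg (by positivity)]
        exact add_pow_bound p hp _ _)
  set M : ℝ := 2 ^ p * (C.toReal + C.toReal) with hM
  have hM0 : 0 ≤ M := by positivity
  have hwM : ∀ k, ∫ x, |u k x - v x| ^ p ∂μ ≤ M := fun k => by
    calc ∫ x, |u k x - v x| ^ p ∂μ ≤ ∫ x, 2 ^ p * (|u k x| ^ p + |v x| ^ p) ∂μ :=
          integral_mono (hwI k) (((huI k).1.add hvI.1).const_mul (2 ^ p))
            (fun x => add_pow_bound p hp _ _)
      _ = 2 ^ p * (∫ x, |u k x| ^ p ∂μ + ∫ x, |v x| ^ p ∂μ) := by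
          rw [integral_const_mul, integral_add (huI k).1 hvI.1]
      _ ≤ M := by
          exact mul_le_mul_of_nonneg_left (add_le_add (huI k).2 hvI.2) (by positivity)
  have hgs : ∀ a, |g a| ≤ K * |a| ^ p := fun a => by
    have := hg a 0
    simp only [g0, sub_zero, abs_zero] at this
    rwa [max_eq_left (abs_nonneg a), mul_assoc,
      ← Real.rpow_add_one' (abs_nonneg a) (by linarith), sub_add_cancel] at this
  have hgI : ∀ w : α → ℝ, Measurable w → Integrable (fun x => |w x| ^ p) μ →
      Integrable (fun x => g (w x)) μ := fun w hw hi =>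
    (hi.const_mul K).mono' (hgc.measurable.comp hw).aestronglyMeasurable
      (Eventually.of_forall fun x => hgs _)
  have hgu := fun k => hgI _ (hmeas k) (huI k).1
  have hgw := fun k => hgI _ (hwm k) (hwI k)
  have hgv := hgI _ hvmeas hvI.1
  refine ⟨fun k => ⟨hgu k, hgw k⟩, hgv, ?_⟩
  rw [Metric.tendsto_atTop]
  intro η hη
  set ε : ℝ := η / (2 * (M + 1)) with hε
  have hε0 : 0 < ε := by positivity
  have hεM : ε * M ≤ η / 2 := by
    have h : ε * (M + 1) = η / 2 := by rw [hε]; field_simp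
    nlinarith
  obtain ⟨D, hD, hDb⟩ := eps_bound p hp g K hK hg ε hε0
  set H : ℕ → α → ℝ := fun k x => |g (u k x) - g (u k x - v x) - g (v x)| with hH
  set W : ℕ → α → ℝ := fun k x => max (H k x - ε * |u k x - v x| ^ p) 0 with hW
  have hHI : ∀ k, Integrable (H k) μ := fun k => (((hgu k).sub (hgw k)).sub hgv).abs
  have hWI : ∀ k, Integrable (W k) μ := fun k =>
    ((hHI k).sub ((hwI k).const_mul ε)).pos_part
  have hWt : Tendsto (fun k => ∫ x, W k x ∂μ) atTop (nhds (∫ _, (0 : ℝ) ∂μ)) := by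
    refine tendsto_integral_of_dominated_convergence (fun x => (D + K) * |v x| ^ p)
      (fun k => (hWI k).aestronglyMeasurable) (hvI.1.const_mul _) (fun k => ?_) ?_
    · refine Eventually.of_forall fun x => ?_
      rw [Real.norm_of_nonneg (le_max_right _ _)]
      refine max_le ?_ (by positivity)
      have h1 := hDb (u k x - v x) (v x)
      rw [sub_add_cancel] at h1
      have h2 := hgs (v x)
      have h3 : H k x ≤ |g (u k x) - g (u k x - v x)| + |g (v x)| := abs_sub _ _
      linarith
    · filter_upwards [hae] with x hx
      have hc : Continuous (fun s : ℝ =>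
          max (|g s - g (s - v x) - g (v x)| - ε * |s - v x| ^ p) 0) := by
        have := hpc.comp (continuous_id.sub (continuous_const (y := v x)))
        simp only [Function.comp_def, id] at this
        fun_prop
      have := (hc.tendsto (v x)).comp hx
      simpa [g0, Real.zero_rpow (show p ≠ 0 by linarith), Function.comp_def] using this
  rw [integral_zero, Metric.tendsto_atTop] at hWt
  obtain ⟨n, hn⟩ := hWt (η / 2) (by positivity)
  refine ⟨n, fun k hk => ?_⟩
  have h1 := hn k hk
  rw [Real.dist_eq, sub_zero] at h1
  have h2 := lt_of_abs_lt h1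
  rw [Real.dist_eq, ← integral_sub (hgu k) (hgw k), ← integral_sub (show Integrable (fun x => g (u k x) - g (u k x - v x)) μ from
    (hgu k).sub (hgw k)) hgv]
  calc |∫ x, g (u k x) - g (u k x - v x) - g (v x) ∂μ| ≤ ∫ x, H k x ∂μ :=
        abs_integral_le_integral_abs
    _ ≤ ∫ x, W k x + ε * |u k x - v x| ^ p ∂μ := by
        refine integral_mono (hHI k) ((hWI k).add ((hwI k).const_mul ε)) fun x => ?_
        have : H k x - ε * |u k x - v x| ^ p ≤ W k x := le_max_left _ _
        show H k x ≤ W k x + ε * |u k x - v x| ^ p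
        linarith
    _ = ∫ x, W k x ∂μ + ε * ∫ x, |u k x - v x| ^ p ∂μ := by
        rw [integral_add (hWI k) ((hwI k).const_mul ε), integral_const_mul]
    _ < η := by
        have := mul_le_mul_of_nonneg_left (hwM k) hε0.le
        linarith

/-- **Lemma 3.2(c) (Brezis–Lieb type).** If `f ∈ C¹(ℝ)` with `f(0) = 0` and
`|f'(s)| ≤ A₁|s|^{2*−2}`, `u_k → u` a.e. and `sup_k ∫|u_k|^{2*} < ∞`, then
`∫ f(u_k)u_k − ∫ f(u_k−u)(u_k−u) → ∫ f(u)u`, all the integrals being finite.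
Here `2* = 2N/(N−2)`. -/
theorem brezis_lieb_f
    (N : ℕ) (hN : 3 ≤ N)
    (f : ℝ → ℝ) (hC1 : ContDiff ℝ 1 f) (hf0 : f 0 = 0)
    (A₁ : ℝ) (hA₁ : 0 < A₁)
    (hd : ∀ s : ℝ, |deriv f s| ≤ A₁ * |s| ^ (2 * (N : ℝ) / ((N : ℝ) - 2) - 2))
    (u : ℕ → EuclideanSpace ℝ (Fin N) → ℝ) (v : EuclideanSpace ℝ (Fin N) → ℝ)
    (hmeas : ∀ k, Measurable (u k)) (hvmeas : Measurable v)
    (hae : ∀ᵐ x : EuclideanSpace ℝ (Fin N), Tendsto (fun k => u k x) atTop (nhds (v x)))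
    (C : ℝ≥0∞) (hC : C ≠ ⊤)
    (hbd : ∀ k, (∫⁻ x : EuclideanSpace ℝ (Fin N),
        ENNReal.ofReal (|u k x| ^ (2 * (N : ℝ) / ((N : ℝ) - 2)))) ≤ C) :
    (∀ k, Integrable (fun x : EuclideanSpace ℝ (Fin N) => f (u k x) * u k x) ∧
      Integrable (fun x : EuclideanSpace ℝ (Fin N) => f (u k x - v x) * (u k x - v x))) ∧
    Integrable (fun x : EuclideanSpace ℝ (Fin N) => f (v x) * v x) ∧
    Tendsto (fun k =>
        (∫ x : EuclideanSpace ℝ (Fin N), f (u k x) * u k x) -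
          ∫ x : EuclideanSpace ℝ (Fin N), f (u k x - v x) * (u k x - v x))
      atTop (nhds (∫ x : EuclideanSpace ℝ (Fin N), f (v x) * v x)) := by
  have hN' : (3 : ℝ) ≤ N := by exact_mod_cast hN
  have hp : 2 < 2 * (N : ℝ) / ((N : ℝ) - 2) := by
    rw [lt_div_iff₀ (by linarith)]; linarith
  exact BL volume _ hp (fun s => f s * s) (hC1.continuous.mul continuous_id) (by simp)
    (2 * A₁) (by positivity) (g_bound _ hp f hC1 hf0 A₁ hA₁ hd) u v hmeas hvmeas hae C hC hbd
end
end
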